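/- Let n ≥ 3, σ > 0, ρ ∈ (−1/n, 1), and let Z ~ N(μ, σ²Ξ) be an n-dimensional Gaussian random vector, where Ξ is the n×n matrix with diagonal entries 1 and all off-diagonal entries ρ, and suppose Pμ ≠ 0. Then for every θ ∈ S^{n−1} ∩ ⟨𝟙⟩^⊥, Var(T_{χ(Z)}(θ)) = [ f_{n−1}(‖Pμ‖/(σ√(1−ρ))) − g_{n−1}(‖Pμ‖/(σ√(1−ρ))) ] · (χ(μ)ᵀθ)² + g_{n−1}(‖Pμ‖/(σ√(1−ρ))). -/

import Mathlib

open MeasureTheory ProbabilityTheory Matrix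

noncomputable section

def euclNorm {n : ℕ} (x : Fin n → ℝ) : ℝ := Real.sqrt (∑ i, x i ^ 2)

def centerMat (n : ℕ) : Matrix (Fin n) (Fin n) ℝ :=
  1 - (n : ℝ)⁻¹ • Matrix.of (fun _ _ => (1 : ℝ))

def chi {n : ℕ} (z : Fin n → ℝ) : Fin n → ℝ :=
  (euclNorm ((centerMat n).mulVec z))⁻¹ • (centerMat n).mulVec z

def meanVec {Ω : Type*} [MeasurableSpace Ω] (P : Measure Ω) {n : ℕ}
    (X : Ω → Fin n → ℝ) : Fin n → ℝ := fun i => ∫ ω, X ω i ∂P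

def covMatrix {Ω : Type*} [MeasurableSpace Ω] (P : Measure Ω) {n : ℕ}
    (X : Ω → Fin n → ℝ) : Matrix (Fin n) (Fin n) ℝ :=
  Matrix.of fun i j => ∫ ω, (X ω i - meanVec P X i) * (X ω j - meanVec P X j) ∂P

def MRL {Ω : Type*} [MeasurableSpace Ω] (P : Measure Ω) {n : ℕ}
    (X : Ω → Fin n → ℝ) : ℝ := euclNorm (meanVec P X)

def MD {Ω : Type*} [MeasurableSpace Ω] (P : Measure Ω) {n : ℕ}
    (X : Ω → Fin n → ℝ) : Fin n → ℝ := (euclNorm (meanVec P X))⁻¹ • meanVec P X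

def stdGaussianPi (n : ℕ) : Measure (Fin n → ℝ) :=
  Measure.pi fun _ => gaussianReal 0 1

def IsGaussianVec {Ω : Type*} [MeasurableSpace Ω] (P : Measure Ω) {n : ℕ}
    (Z : Ω → Fin n → ℝ) (m : Fin n → ℝ) (S : Matrix (Fin n) (Fin n) ℝ) : Prop :=
  ∃ A : Matrix (Fin n) (Fin n) ℝ, A * Aᵀ = S ∧
    Measure.map Z P = Measure.map (fun x => m + A.mulVec x) (stdGaussianPi n)

def ascFact (a : ℝ) (k : ℕ) : ℝ := ∏ i ∈ Finset.range k, (a + i)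

def kummerM (a b z : ℝ) : ℝ := ∑' k : ℕ, (ascFact a k / ascFact b k) * z ^ k / (Nat.factorial k)

def varrho (m : ℕ) (x : ℝ) : ℝ :=
  (Real.Gamma (((m : ℝ) + 1) / 2) / (Real.sqrt 2 * Real.Gamma (((m : ℝ) + 2) / 2))) * x *
    kummerM (1 / 2) (((m : ℝ) + 2) / 2) (-x ^ 2 / 2)

def fFun (m : ℕ) (x : ℝ) : ℝ :=
  1 - (((m : ℝ) - 1) / m) * kummerM 1 ((m : ℝ) / 2 + 1) (-x ^ 2 / 2) - (varrho m x) ^ 2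

def gFun (m : ℕ) (x : ℝ) : ℝ :=
  (1 / (m : ℝ)) * kummerM 1 ((m : ℝ) / 2 + 1) (-x ^ 2 / 2)

def Vmat (n : ℕ) : Matrix (Fin n) (Fin n) ℝ :=
  Matrix.of fun i j =>
    if (j : ℕ) = n - 1 then 1 / Real.sqrt n
    else if (i : ℕ) = (j : ℕ) then
      ((n : ℝ) - 1 - (j : ℕ)) / Real.sqrt (((n : ℝ) - 1 - (j : ℕ)) * ((n : ℝ) - (j : ℕ)))
    else if (j : ℕ) < (i : ℕ) then
      -(1 / Real.sqrt (((n : ℝ) - 1 - (j : ℕ)) * ((n : ℝ) - (j : ℕ))))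
    else 0

def projMat (n : ℕ) : Matrix (Fin n) (Fin n) ℝ :=
  Matrix.diagonal fun i => if (i : ℕ) < n - 1 then 1 else 0

def embedZero {n : ℕ} (v : Fin (n - 1) → ℝ) : Fin n → ℝ :=
  fun i => if h : (i : ℕ) < n - 1 then v ⟨i, h⟩ else 0

def Ximat (n : ℕ) (r : ℝ) : Matrix (Fin n) (Fin n) ℝ :=
  Matrix.of fun i j => if i = j then 1 else r

def stdNormCDF (x : ℝ) : ℝ := (gaussianReal 0 1 (Set.Iic x)).toReal

def thetaTilde : Fin 2 → ℝ := ![Real.sqrt 2 / 2, -(Real.sqrt 2 / 2)]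

/-!
Projecting `Z` to the hyperplane `⟨𝟙⟩^⊥` and dividing by `s = σ√(1 - ρ)` gives a vector
`Y ~ N(ν, I)` in dimension `d = n - 1` with `‖ν‖ = ‖Pμ‖ / s`, and `χ(Z) = Y / ‖Y‖`. The first two
moments of `⟨θ, Y⟩ / ‖Y‖` follow from `Γ(a) r⁻ᵃ = ∫ tᵃ⁻¹ e^{-rt} dt` with `r = ‖Y‖² / 2`: weighting
`N(ν, I)` by `e^{-t‖Y‖²/2}` gives a Gaussian law again, up to the factor
`(1 + t)^{-d/2} exp (-(t / (1 + t)) ‖ν‖² / 2)`, and `t = u / (1 - u)` turns the remaining integral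
over `t` into Euler's integral for Kummer's function. The second moment has the form
`A ⟨θ, ν⟩² + g_d(‖ν‖)`; summing over an orthonormal basis gives `A ‖ν‖² + d g_d(‖ν‖) = 1`, which
determines `A ‖ν‖²` without a second evaluation of an Euler integral.
-/

section Kummer

lemma ascFact_pos {a : ℝ} (ha : 0 < a) (k : ℕ) : 0 < ascFact a k :=
  Finset.prod_pos fun _ _ => by positivity

lemma Gamma_add_natCast {a : ℝ} (ha : 0 < a) (k : ℕ) :
    Real.Gamma (a + k) = ascFact a k * Real.Gamma a := by
  induction k with
  | zero => simp [ascFact]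
  | succ k ih =>
    rw [Nat.cast_succ, ← add_assoc, Real.Gamma_add_one (by positivity), ih, ascFact, ascFact,
      Finset.prod_range_succ]
    ring

lemma beta_add_natCast_div_beta {a c : ℝ} (ha : 0 < a) (hc : 0 < c) (k : ℕ) :
    beta (a + k) c / beta a c = ascFact a k / ascFact (a + c) k := by
  have hac : 0 < a + c := by positivity
  have := Real.Gamma_pos_of_pos ha
  have := Real.Gamma_pos_of_pos hc
  have := Real.Gamma_pos_of_pos hac
  have := ascFact_pos hac k
  rw [beta, beta, add_right_comm, Gamma_add_natCast ha, Gamma_add_natCast hac]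
  field_simp

lemma ae_mem_Ioo_betaMeasure (a c : ℝ) : ∀ᵐ x ∂betaMeasure a c, x ∈ Set.Ioo (0 : ℝ) 1 := by
  rw [betaMeasure, ae_withDensity_iff (by unfold betaPDF; fun_prop)]
  refine ae_of_all _ fun x hx => ?_
  by_contra hmem
  exact hx (by rw [betaPDF_eq, if_neg (show ¬(0 < x ∧ x < 1) from hmem), ENNReal.ofReal_zero])

lemma integral_betaMeasure {a c : ℝ} (ha : 0 < a) (hc : 0 < c) (f : ℝ → ℝ) :
    ∫ x, f x ∂betaMeasure a c =
      (beta a c)⁻¹ * ∫ x in Set.Ioo (0 : ℝ) 1, x ^ (a - 1) * (1 - x) ^ (c - 1) * f x := by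
  have hpdf_meas : Measurable (betaPDF a c) := (measurable_betaPDFReal a c).ennreal_ofReal
  rw [betaMeasure, integral_withDensity_eq_integral_toReal_smul hpdf_meas
      (ae_of_all _ fun _ => ENNReal.ofReal_lt_top),
    ← integral_const_mul, ← integral_indicator measurableSet_Ioo]
  refine integral_congr_ae (ae_of_all _ fun x => ?_)
  by_cases hx : x ∈ Set.Ioo (0 : ℝ) 1
  · have hpdf := (betaPDFReal_pos hx.1 hx.2 ha hc).le
    rw [Set.indicator_of_mem hx]
    simp only [betaPDF, ENNReal.toReal_ofReal hpdf]
    simp only [betaPDFReal, if_pos (Set.mem_Ioo.1 hx), smul_eq_mul]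
    ring
  · rw [Set.indicator_of_notMem hx]
    simp only [betaPDF_eq, if_neg (Set.mem_Ioo.not.1 hx), ENNReal.ofReal_zero,
      ENNReal.toReal_zero, zero_smul]

lemma integral_rpow_mul_one_sub_rpow {a c : ℝ} (ha : 0 < a) (hc : 0 < c) :
    ∫ x in Set.Ioo (0 : ℝ) 1, x ^ (a - 1) * (1 - x) ^ (c - 1) = beta a c := by
  have := isProbabilityMeasureBeta ha hc
  have hmass := integral_betaMeasure ha hc fun _ => 1
  simp only [integral_const, probReal_univ, smul_eq_mul, mul_one] at hmass
  exact ((inv_mul_eq_one₀ (beta_pos ha hc).ne').1 hmass.symm).symm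

lemma integral_pow_betaMeasure {a c : ℝ} (ha : 0 < a) (hc : 0 < c) (k : ℕ) :
    ∫ x, x ^ k ∂betaMeasure a c = ascFact a k / ascFact (a + c) k := by
  rw [integral_betaMeasure ha hc, ← beta_add_natCast_div_beta ha hc,
    ← integral_rpow_mul_one_sub_rpow (a := a + k) (by positivity) hc, div_eq_inv_mul]
  congr 1
  refine setIntegral_congr_fun measurableSet_Ioo fun x hx => ?_
  have hpow : x ^ (a + k - 1) = x ^ (a - 1) * x ^ k := by
    rw [← Real.rpow_natCast, ← Real.rpow_add hx.1, add_sub_right_comm]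
  simp only [hpow]
  ring

lemma mgf_id_betaMeasure {a c : ℝ} (ha : 0 < a) (hc : 0 < c) (z : ℝ) :
    mgf id (betaMeasure a c) z = kummerM a (a + c) z := by
  have := isProbabilityMeasureBeta ha hc
  have hterm : ∀ k : ℕ, ∀ᵐ x ∂betaMeasure a c,
      ‖(z * x) ^ k / k.factorial‖ ≤ |z| ^ k / k.factorial := fun k => by
    filter_upwards [ae_mem_Ioo_betaMeasure a c] with x hx
    have hx0 : 0 ≤ x := hx.1.le
    rw [norm_div, norm_pow, norm_mul, Real.norm_natCast, Real.norm_eq_abs, Real.norm_of_nonneg hx0]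
    gcongr
    exact mul_le_of_le_one_right (abs_nonneg z) hx.2.le
  have hsum := hasSum_integral_of_dominated_convergence _
    (fun k => Measurable.aestronglyMeasurable (by fun_prop)) hterm
    (ae_of_all _ fun _ => Real.summable_pow_div_factorial |z|) (integrable_const _)
    (ae_of_all _ fun x => Real.exp_eq_exp_ℝ ▸ NormedSpace.expSeries_div_hasSum_exp (z * x))
  simp only [mgf, id_eq]
  rw [kummerM, ← hsum.tsum_eq]
  refine tsum_congr fun k => ?_
  simp_rw [mul_pow, mul_div_right_comm, integral_const_mul, integral_pow_betaMeasure ha hc]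
  ring

lemma integral_rpow_mul_one_sub_rpow_mul_exp {a c : ℝ} (ha : 0 < a) (hc : 0 < c) (z : ℝ) :
    ∫ x in Set.Ioo (0 : ℝ) 1, x ^ (a - 1) * (1 - x) ^ (c - 1) * Real.exp (z * x) =
      beta a c * kummerM a (a + c) z := by
  rw [← mgf_id_betaMeasure ha hc, mgf, integral_betaMeasure ha hc,
    mul_inv_cancel_left₀ (beta_pos ha hc).ne']
  rfl

end Kummer

section LaplaceKernel

lemma image_div_one_sub_Ioo :
    (fun s : ℝ => s / (1 - s)) '' Set.Ioo 0 1 = Set.Ioi 0 := by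
  ext t
  constructor
  · rintro ⟨s, ⟨hs0, hs1⟩, rfl⟩
    exact div_pos hs0 (sub_pos.2 hs1)
  · intro (ht : 0 < t)
    refine ⟨t / (1 + t), ⟨by positivity, (div_lt_one (by positivity)).2 (by linarith)⟩, ?_⟩
    field_simp
    ring

lemma integral_Ioi_eq_integral_Ioo_div_one_sub (g : ℝ → ℝ) :
    ∫ t in Set.Ioi (0 : ℝ), g t =
      ∫ s in Set.Ioo (0 : ℝ) 1, ((1 - s) ^ 2)⁻¹ * g (s / (1 - s)) := by
  have hderiv : ∀ s ∈ Set.Ioo (0 : ℝ) 1,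
      HasDerivWithinAt (fun s : ℝ => s / (1 - s)) ((1 - s) ^ 2)⁻¹ (Set.Ioo 0 1) s := by
    intro s hs
    have hs1 : 1 - s ≠ 0 := (sub_pos.2 hs.2).ne'
    refine (((hasDerivAt_id' s).fun_div ((hasDerivAt_id' s).const_sub 1) hs1).congr_deriv
      ?_).hasDerivWithinAt
    field_simp
    ring
  have hinj : Set.InjOn (fun s : ℝ => s / (1 - s)) (Set.Ioo 0 1) := by
    intro s hs u hu hsu
    have hs1 : 1 - s ≠ 0 := (sub_pos.2 hs.2).ne'
    have hu1 : 1 - u ≠ 0 := (sub_pos.2 hu.2).ne'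
    field_simp at hsu
    linarith
  rw [← image_div_one_sub_Ioo,
    integral_image_eq_integral_abs_deriv_smul measurableSet_Ioo hderiv hinj]
  simp only [abs_inv, abs_sq, smul_eq_mul]

/-- The Laplace transform `t ↦ 𝔼 exp (-t ‖Y‖² / 2)` of half a noncentral chi-squared variable, for
`Y ~ N(ν, I)` in dimension `2 d` with `‖ν‖² / 2 = q`. -/
def laplaceKernel (d q t : ℝ) : ℝ := (1 + t) ^ (-d) * Real.exp (-q * (t / (1 + t)))

lemma laplaceKernel_mul_inv {t : ℝ} (ht : 0 < t) (d q : ℝ) :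
    laplaceKernel d q t * (1 + t)⁻¹ = laplaceKernel (d + 1) q t := by
  rw [laplaceKernel, laplaceKernel, neg_add, Real.rpow_add (by positivity), Real.rpow_neg_one]
  ring

lemma prod_laplaceKernel {ι : Type*} (s : Finset ι) (d q : ι → ℝ) {t : ℝ} (ht : 0 < t) :
    ∏ i ∈ s, laplaceKernel (d i) (q i) t = laplaceKernel (∑ i ∈ s, d i) (∑ i ∈ s, q i) t := by
  simp only [laplaceKernel]
  rw [Finset.prod_mul_distrib, ← Real.exp_sum, ← Real.rpow_sum_of_pos (by positivity),
    Finset.sum_neg_distrib, ← Finset.sum_mul, Finset.sum_neg_distrib]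

lemma integrableOn_laplaceKernel {d q : ℝ} (hd : 1 < d) (hq : 0 ≤ q) :
    IntegrableOn (laplaceKernel d q) (Set.Ioi 0) := by
  have hpow := integrableOn_add_rpow_Ioi_of_lt (a := -d) (c := 0) (m := 1) (by linarith)
    (by norm_num)
  refine Integrable.mono' hpow (Measurable.aestronglyMeasurable (by unfold laplaceKernel; fun_prop))
    (ae_restrict_of_forall_mem measurableSet_Ioi fun t (ht : 0 < t) => ?_)
  have hexp : Real.exp (-q * (t / (1 + t))) ≤ 1 := by
    rw [Real.exp_le_one_iff, neg_mul, neg_nonpos]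
    positivity
  rw [laplaceKernel, Real.norm_of_nonneg (by positivity), add_comm t 1]
  exact mul_le_of_le_one_right (by positivity) hexp

-- The substitution `t = s / (1 - s)` turns this Mellin transform into Euler's integral for
-- Kummer's function.
lemma integral_rpow_mul_laplaceKernel {a d : ℝ} (ha : 0 < a) (had : a < d) (q : ℝ) :
    ∫ t in Set.Ioi (0 : ℝ), t ^ (a - 1) * laplaceKernel d q t =
      beta a (d - a) * kummerM a d (-q) := by
  have heuler := integral_rpow_mul_one_sub_rpow_mul_exp ha (sub_pos.2 had) (-q)
  rw [add_sub_cancel] at heuler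
  rw [← heuler, integral_Ioi_eq_integral_Ioo_div_one_sub]
  refine setIntegral_congr_fun measurableSet_Ioo fun s hs => ?_
  have hs0 : 0 < s := hs.1
  have hs1 : 0 < 1 - s := sub_pos.2 hs.2
  have hbase : 1 + s / (1 - s) = (1 - s)⁻¹ := by field_simp; ring
  have hfrac : s / (1 - s) / (1 - s)⁻¹ = s := by field_simp
  have hpow : (1 - s) ^ (d - a - 1) = (1 - s) ^ d * (1 - s) ^ (-(a - 1)) * ((1 - s) ^ 2)⁻¹ := by
    rw [← Real.rpow_natCast (1 - s) 2, ← Real.rpow_neg hs1.le, ← Real.rpow_add hs1,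
      ← Real.rpow_add hs1]
    congr 1
    push_cast
    ring
  simp only [laplaceKernel, hbase, hfrac]
  rw [hpow, Real.div_rpow hs0.le hs1.le, Real.inv_rpow hs1.le, Real.rpow_neg hs1.le d, inv_inv,
    Real.rpow_neg hs1.le (a - 1)]
  ring

end LaplaceKernel

section Tilt

lemma integral_sq_gaussianReal (m : ℝ) (v : NNReal) :
    ∫ y, y ^ 2 ∂gaussianReal m v = m ^ 2 + v := by
  have hvar := variance_fun_id_gaussianReal (μ := m) (v := v)
  rw [variance_eq_sub (by simpa using! memLp_id_gaussianReal (μ := m) (v := v) 2)] at hvar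
  have hmean : ∫ y, y ∂gaussianReal m v = m := integral_id_gaussianReal
  simp only [Pi.pow_apply, hmean] at hvar
  linarith

lemma gaussianPDFReal_mul_exp_neg {t : ℝ} (ht : 0 < t) (m y : ℝ) :
    gaussianPDFReal m 1 y * Real.exp (-(y ^ 2 / 2 * t)) =
      laplaceKernel (1 / 2) (m ^ 2 / 2) t *
        gaussianPDFReal (m / (1 + t)) (Real.toNNReal (1 / (1 + t))) y := by
  have hp : 0 < 1 + t := by positivity
  have hsqrt : (√(2 * Real.pi))⁻¹ =
      (1 + t) ^ (-(1 / 2) : ℝ) * (√(2 * Real.pi * (1 / (1 + t))))⁻¹ := by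
    rw [Real.sqrt_mul (by positivity) (1 / (1 + t)), Real.rpow_neg hp.le, ← Real.sqrt_eq_rpow,
      Real.sqrt_div zero_le_one, Real.sqrt_one]
    field_simp
  have hexp : Real.exp (-(y - m) ^ 2 / 2) * Real.exp (-(y ^ 2 / 2 * t)) =
      Real.exp (-(m ^ 2 / 2) * (t / (1 + t))) *
        Real.exp (-(y - m / (1 + t)) ^ 2 / (2 * (1 / (1 + t)))) := by
    rw [← Real.exp_add, ← Real.exp_add]
    congr 1
    field_simp
    ring
  simp only [gaussianPDFReal, laplaceKernel, NNReal.coe_one, mul_one,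
    Real.coe_toNNReal _ (one_div_pos.2 hp).le]
  rw [mul_assoc, hexp, hsqrt]
  ring

lemma integral_mul_exp_neg_gaussianReal {t : ℝ} (ht : 0 < t) (m : ℝ) (h : ℝ → ℝ) :
    ∫ y, h y * Real.exp (-(y ^ 2 / 2 * t)) ∂gaussianReal m 1 =
      laplaceKernel (1 / 2) (m ^ 2 / 2) t *
        ∫ y, h y ∂gaussianReal (m / (1 + t)) (Real.toNNReal (1 / (1 + t))) := by
  have hv : Real.toNNReal (1 / (1 + t)) ≠ 0 := (Real.toNNReal_pos.2 (by positivity)).ne'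
  rw [integral_gaussianReal_eq_integral_smul one_ne_zero,
    integral_gaussianReal_eq_integral_smul hv, ← integral_const_mul]
  refine integral_congr_ae (ae_of_all _ fun y => ?_)
  simp only [smul_eq_mul]
  rw [mul_left_comm, gaussianPDFReal_mul_exp_neg ht]
  ring

lemma integral_pi_mul_exp_neg_gaussianReal {ι : Type*} [Fintype ι] {t : ℝ} (ht : 0 < t)
    (m : ι → ℝ) (i : ι) (h : ℝ → ℝ) :
    ∫ y, h (y i) * Real.exp (-((∑ k, y k ^ 2) / 2 * t))
        ∂Measure.pi (fun k => gaussianReal (m k) 1) =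
      laplaceKernel (Fintype.card ι / 2) ((∑ k, m k ^ 2) / 2) t *
        ∫ y, h y ∂gaussianReal (m i / (1 + t)) (Real.toNNReal (1 / (1 + t))) := by
  classical
  let factor : ι → ℝ → ℝ := fun k u => (if k = i then h u else 1) * Real.exp (-(u ^ 2 / 2 * t))
  have hprod : ∀ y : ι → ℝ,
      h (y i) * Real.exp (-((∑ k, y k ^ 2) / 2 * t)) = ∏ k, factor k (y k) := fun y => by
    simp only [factor]
    rw [Finset.prod_mul_distrib, Finset.prod_ite_eq' Finset.univ i (fun k => h (y k)),
      if_pos (Finset.mem_univ i), ← Real.exp_sum, Finset.sum_neg_distrib, Finset.sum_div,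
      Finset.sum_mul]
  have hexponent : ∑ _k : ι, (1 / 2 : ℝ) = Fintype.card ι / 2 := by
    rw [Finset.sum_const, Finset.card_univ, nsmul_eq_mul, mul_one_div]
  simp_rw [hprod]
  rw [integral_fintype_prod_eq_prod]
  simp only [factor, integral_mul_exp_neg_gaussianReal ht]
  rw [Finset.prod_mul_distrib, prod_laplaceKernel _ _ _ ht, hexponent, Finset.sum_div,
    Finset.prod_eq_single i (fun k _ hk => by simp [hk]) (by simp)]
  simp only [if_true]

end Tilt

section GammaIntegral

variable {X : Type*} [MeasurableSpace X] {μ : Measure X} {a : ℝ} {r w : X → ℝ}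

lemma integral_Ioi_rpow_mul_exp_neg_mul {c : ℝ} (ha : 0 < a) (hc : 0 < c) :
    ∫ t in Set.Ioi (0 : ℝ), t ^ (a - 1) * (c ^ a * Real.exp (-(c * t))) = Real.Gamma a := by
  simp_rw [mul_left_comm _ (c ^ a)]
  rw [integral_const_mul, Real.integral_rpow_mul_exp_neg_mul_Ioi ha hc,
    Real.div_rpow zero_le_one hc.le, Real.one_rpow]
  have := Real.rpow_pos_of_pos hc a
  field_simp

lemma integrable_mul_rpow_mul_exp_neg_mul [SFinite μ] (ha : 0 < a) (hr : Measurable r)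
    (hr_pos : ∀ᵐ x ∂μ, 0 < r x) (hw : Integrable w μ) :
    Integrable (fun p : X × ℝ => w p.1 * (p.2 ^ (a - 1) * (r p.1 ^ a * Real.exp (-(r p.1 * p.2)))))
      (μ.prod (volume.restrict (Set.Ioi 0))) := by
  have hmeas : Measurable fun p : X × ℝ =>
      p.2 ^ (a - 1) * (r p.1 ^ a * Real.exp (-(r p.1 * p.2))) := by fun_prop
  refine (integrable_prod_iff
    (hw.aestronglyMeasurable.comp_fst.mul hmeas.aestronglyMeasurable)).2 ⟨?_, ?_⟩
  · filter_upwards [hr_pos] with x hx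
    refine Integrable.const_mul (f := fun t => t ^ (a - 1) * (r x ^ a * Real.exp (-(r x * t))))
      (.of_integral_ne_zero ?_) (w x)
    rw [integral_Ioi_rpow_mul_exp_neg_mul ha hx]
    exact (Real.Gamma_pos_of_pos ha).ne'
  · refine (hw.norm.mul_const (Real.Gamma a)).congr ?_
    filter_upwards [hr_pos] with x hx
    rw [← integral_Ioi_rpow_mul_exp_neg_mul ha hx, ← integral_const_mul]
    refine setIntegral_congr_fun measurableSet_Ioi fun t (ht : 0 < t) => ?_
    have hnonneg : 0 ≤ t ^ (a - 1) * (r x ^ a * Real.exp (-(r x * t))) := by positivity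
    simp only [Pi.mul_apply, norm_mul, Real.norm_of_nonneg hnonneg]

lemma Gamma_mul_integral_eq_integral_Ioi [SFinite μ] (ha : 0 < a) (hr : Measurable r)
    (hr_pos : ∀ᵐ x ∂μ, 0 < r x) (hw : Integrable w μ) :
    Real.Gamma a * ∫ x, w x ∂μ =
      ∫ t in Set.Ioi (0 : ℝ), t ^ (a - 1) * ∫ x, w x * r x ^ a * Real.exp (-(r x * t)) ∂μ := by
  calc Real.Gamma a * ∫ x, w x ∂μ
      = ∫ x, (∫ t in Set.Ioi (0 : ℝ),
          w x * (t ^ (a - 1) * (r x ^ a * Real.exp (-(r x * t))))) ∂μ := by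
        rw [← integral_const_mul]
        refine integral_congr_ae ?_
        filter_upwards [hr_pos] with x hx
        rw [integral_const_mul, integral_Ioi_rpow_mul_exp_neg_mul ha hx, mul_comm]
    _ = ∫ t in Set.Ioi (0 : ℝ), ∫ x, w x * (t ^ (a - 1) * (r x ^ a * Real.exp (-(r x * t)))) ∂μ :=
        integral_integral_swap (integrable_mul_rpow_mul_exp_neg_mul ha hr hr_pos hw)
    _ = _ := by
        simp_rw [← integral_const_mul]
        congr! 4
        ring

end GammaIntegral

section IsotropicGaussian

open NormedSpace (normalize)
open scoped RealInnerProductSpace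

lemma nontrivial_of_norm_eq_one {E : Type*} [NormedAddCommGroup E] {x : E} (hx : ‖x‖ = 1) :
    Nontrivial E :=
  ⟨x, 0, norm_ne_zero_iff.1 (hx ▸ one_ne_zero)⟩

variable {E : Type*} [NormedAddCommGroup E] [InnerProductSpace ℝ E] {θ : E}

lemma exists_orthonormalBasis_apply_eq [FiniteDimensional ℝ E] (hθ : ‖θ‖ = 1) :
    ∃ (b : OrthonormalBasis (Fin (Module.finrank ℝ E)) ℝ E) (i : Fin (Module.finrank ℝ E)),
      b i = θ := by
  have := nontrivial_of_norm_eq_one hθ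
  let i : Fin (Module.finrank ℝ E) := ⟨0, Module.finrank_pos⟩
  have hv : Orthonormal ℝ (({i} : Set _).domRestrict fun _ => θ) :=
    ⟨fun _ => hθ, fun j k hjk => (hjk (Subsingleton.elim j k)).elim⟩
  obtain ⟨b, hb⟩ := hv.exists_orthonormalBasis_extension_of_card_eq (by simp)
  exact ⟨b, i, hb i rfl⟩

lemma inner_normalize_mul_norm (θ y : E) : ⟪θ, normalize y⟫ * ‖y‖ = ⟪θ, y⟫ := by
  rw [mul_comm, ← real_inner_smul_right, NormedSpace.norm_smul_normalize]

lemma abs_inner_normalize_le (hθ : ‖θ‖ = 1) (y : E) : |⟪θ, normalize y⟫| ≤ 1 := by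
  have hnorm : ‖normalize y‖ ≤ 1 := by
    rw [NormedSpace.normalize, norm_smul, norm_inv, norm_norm]
    exact inv_mul_le_one
  calc |⟪θ, normalize y⟫| ≤ ‖θ‖ * ‖normalize y‖ := abs_real_inner_le_norm _ _
    _ ≤ 1 := by rw [hθ, one_mul]; exact hnorm

variable [FiniteDimensional ℝ E] [MeasurableSpace E] [BorelSpace E]

/-- The Gaussian law `N(ν, I)` on `E`. -/
def isotropicGaussian (ν : E) : Measure E := (stdGaussian E).map (ν + ·)

instance (ν : E) : IsProbabilityMeasure (isotropicGaussian ν) :=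
  Measure.isProbabilityMeasure_map (by fun_prop)

lemma isotropicGaussian_eq_map_pi {ι : Type*} [Fintype ι] (b : OrthonormalBasis ι ℝ E) (ν : E) :
    isotropicGaussian ν =
      (Measure.pi fun i => gaussianReal ⟪b i, ν⟫ 1).map (fun y => ∑ i, y i • b i) := by
  have hpi : (Measure.pi fun _ : ι => gaussianReal 0 1).map (fun y i => ⟪b i, ν⟫ + y i) =
      Measure.pi fun i => gaussianReal ⟪b i, ν⟫ 1 := by
    rw [Measure.pi_map_pi (by fun_prop)]
    simp_rw [gaussianReal_map_const_add, zero_add]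
  rw [isotropicGaussian, stdGaussian_eq_map_pi_orthonormalBasis b, ← hpi,
    Measure.map_map (by fun_prop) (by fun_prop), Measure.map_map (by fun_prop) (by fun_prop)]
  congr 1
  funext y
  simp only [Function.comp_apply, add_smul, Finset.sum_add_distrib, b.sum_repr']

lemma integral_inner_mul_exp_neg_isotropicGaussian (hθ : ‖θ‖ = 1) {t : ℝ} (ht : 0 < t) (ν : E)
    {h : ℝ → ℝ} (hh : Measurable h) :
    ∫ y, h ⟪θ, y⟫ * Real.exp (-(‖y‖ ^ 2 / 2 * t)) ∂isotropicGaussian ν =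
      laplaceKernel (Module.finrank ℝ E / 2) (‖ν‖ ^ 2 / 2) t *
        ∫ u, h u ∂gaussianReal (⟪θ, ν⟫ / (1 + t)) (Real.toNNReal (1 / (1 + t))) := by
  obtain ⟨b, i, rfl⟩ := exists_orthonormalBasis_apply_eq hθ
  have hcoord (y : Fin (Module.finrank ℝ E) → ℝ) (k) : ⟪b k, ∑ j, y j • b j⟫ = y k :=
    b.orthonormal.inner_right_fintype y k
  have hnorm (y : Fin (Module.finrank ℝ E) → ℝ) : ‖∑ j, y j • b j‖ ^ 2 = ∑ j, y j ^ 2 := by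
    simp_rw [← b.sum_sq_inner_right, hcoord]
  rw [isotropicGaussian_eq_map_pi b, integral_map (Measurable.aemeasurable (by fun_prop))
    (Measurable.aestronglyMeasurable (by fun_prop))]
  simp_rw [hcoord, hnorm]
  rw [integral_pi_mul_exp_neg_gaussianReal ht, b.sum_sq_inner_right, Fintype.card_fin]

lemma ae_ne_zero_isotropicGaussian [Nontrivial E] (ν : E) :
    ∀ᵐ y ∂isotropicGaussian ν, y ≠ 0 := by
  let b := stdOrthonormalBasis ℝ E
  let i : Fin (Module.finrank ℝ E) := ⟨0, Module.finrank_pos⟩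
  have := nullSingletonClass_gaussianReal (μ := ⟪b i, ν⟫) one_ne_zero
  have hpi := Measure.ae_eval_ne (fun k => gaussianReal ⟪b k, ν⟫ 1) i 0
  rw [isotropicGaussian_eq_map_pi b]
  refine (ae_map_iff (Measurable.aemeasurable (by fun_prop))
    (measurableSet_singleton 0).compl).2 ?_
  filter_upwards [hpi] with y hy hsum
  exact hy (by rw [← b.orthonormal.inner_right_fintype y i, hsum, inner_zero_right])

lemma ae_norm_sq_div_two_pos_isotropicGaussian [Nontrivial E] (ν : E) :
    ∀ᵐ y ∂isotropicGaussian ν, 0 < ‖y‖ ^ 2 / 2 := by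
  filter_upwards [ae_ne_zero_isotropicGaussian ν] with y hy
  positivity

lemma measurable_inner_normalize : Measurable fun y : E => ⟪θ, normalize y⟫ := by
  unfold NormedSpace.normalize
  fun_prop

lemma memLp_inner_normalize (hθ : ‖θ‖ = 1) (p : ENNReal) (ν : E) :
    MemLp (fun y => ⟪θ, normalize y⟫) p (isotropicGaussian ν) :=
  .of_bound measurable_inner_normalize.aestronglyMeasurable 1
    (ae_of_all _ (abs_inner_normalize_le hθ))

lemma integral_inner_normalize_isotropicGaussian (hθ : ‖θ‖ = 1) (ν : E) :
    ∫ y, ⟪θ, normalize y⟫ ∂isotropicGaussian ν =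
      ⟪θ, normalize ν⟫ * varrho (Module.finrank ℝ E) ‖ν‖ := by
  have := nontrivial_of_norm_eq_one hθ
  set d := Module.finrank ℝ E
  have hd : (1 / 2 : ℝ) < d / 2 + 1 := by linarith [d.cast_nonneg (α := ℝ)]
  have hmellin := Gamma_mul_integral_eq_integral_Ioi (a := 1 / 2) (r := fun y : E => ‖y‖ ^ 2 / 2)
    (by positivity) (by fun_prop) (ae_norm_sq_div_two_pos_isotropicGaussian ν)
    ((memLp_inner_normalize hθ 1 ν).integrable le_rfl)
  have hscale (y : E) : ⟪θ, normalize y⟫ * (‖y‖ ^ 2 / 2) ^ (1 / 2 : ℝ) = ⟪θ, y⟫ / √2 := by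
    rw [← Real.sqrt_eq_rpow, Real.sqrt_div (sq_nonneg _), Real.sqrt_sq (norm_nonneg y),
      ← inner_normalize_mul_norm θ y, mul_div_assoc]
  have hinner : ∀ t ∈ Set.Ioi (0 : ℝ), t ^ (1 / 2 - 1 : ℝ) *
        ∫ y, ⟪θ, y⟫ / √2 * Real.exp (-(‖y‖ ^ 2 / 2 * t)) ∂isotropicGaussian ν =
      ⟪θ, ν⟫ / √2 * (t ^ (1 / 2 - 1 : ℝ) * laplaceKernel (d / 2 + 1) (‖ν‖ ^ 2 / 2) t) := by
    intro t (ht : 0 < t)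
    rw [integral_inner_mul_exp_neg_isotropicGaussian hθ ht ν (h := fun u => u / √2) (by fun_prop),
      integral_div, integral_id_gaussianReal, ← laplaceKernel_mul_inv ht]
    ring
  simp_rw [hscale] at hmellin
  rw [setIntegral_congr_fun measurableSet_Ioi hinner, integral_const_mul,
    integral_rpow_mul_laplaceKernel (by positivity) hd, beta,
    ← inner_normalize_mul_norm θ ν, add_sub_cancel,
    show (d / 2 + 1 - 1 / 2 : ℝ) = (d + 1) / 2 by ring,
    show (d / 2 + 1 : ℝ) = (d + 2) / 2 by ring] at hmellin
  have hΓ : Real.Gamma (1 / 2) ≠ 0 := (Real.Gamma_pos_of_pos (by positivity)).ne'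
  refine mul_left_cancel₀ hΓ (hmellin.trans ?_)
  rw [varrho, neg_div]
  ring

lemma gFun_eq_integral_laplaceKernel {d : ℕ} (hd : 0 < d) (x : ℝ) :
    gFun d x = (∫ t in Set.Ioi (0 : ℝ), laplaceKernel (d / 2 + 1) (x ^ 2 / 2) t) / 2 := by
  have hd' : (0 : ℝ) < d / 2 := by positivity
  have hmellin := integral_rpow_mul_laplaceKernel one_pos (lt_add_of_pos_left 1 hd') (x ^ 2 / 2)
  simp only [sub_self, Real.rpow_zero, one_mul, add_sub_cancel_right] at hmellin
  have := Real.Gamma_pos_of_pos hd'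
  rw [hmellin, gFun, beta, Real.Gamma_one, add_comm 1, Real.Gamma_add_one hd'.ne', neg_div]
  field_simp

lemma integral_inner_normalize_sq_eq_integral_laplaceKernel (hθ : ‖θ‖ = 1) (ν : E) :
    ∫ y, ⟪θ, normalize y⟫ ^ 2 ∂isotropicGaussian ν =
      ⟪θ, ν⟫ ^ 2 * ((∫ t in Set.Ioi (0 : ℝ),
        laplaceKernel (Module.finrank ℝ E / 2 + 2) (‖ν‖ ^ 2 / 2) t) / 2) +
        gFun (Module.finrank ℝ E) ‖ν‖ := by
  have := nontrivial_of_norm_eq_one hθ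
  set d := Module.finrank ℝ E
  have hd : 0 < d := Module.finrank_pos
  have hmellin := Gamma_mul_integral_eq_integral_Ioi (a := 1) (r := fun y : E => ‖y‖ ^ 2 / 2)
    one_pos (by fun_prop) (ae_norm_sq_div_two_pos_isotropicGaussian ν)
    (memLp_inner_normalize hθ 2 ν).integrable_sq
  have hscale (y : E) : ⟪θ, normalize y⟫ ^ 2 * (‖y‖ ^ 2 / 2) = ⟪θ, y⟫ ^ 2 / 2 := by
    rw [← inner_normalize_mul_norm θ y]
    ring
  have hinner : ∀ t ∈ Set.Ioi (0 : ℝ),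
      ∫ y, ⟪θ, y⟫ ^ 2 / 2 * Real.exp (-(‖y‖ ^ 2 / 2 * t)) ∂isotropicGaussian ν =
      ⟪θ, ν⟫ ^ 2 / 2 * laplaceKernel (d / 2 + 2) (‖ν‖ ^ 2 / 2) t +
        2⁻¹ * laplaceKernel (d / 2 + 1) (‖ν‖ ^ 2 / 2) t := by
    intro t (ht : 0 < t)
    have hv : 0 ≤ 1 / (1 + t) := by positivity
    rw [integral_inner_mul_exp_neg_isotropicGaussian hθ ht ν (h := fun u => u ^ 2 / 2)
      (by fun_prop), integral_div, integral_sq_gaussianReal, Real.coe_toNNReal _ hv,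
      ← one_add_one_eq_two, ← add_assoc, ← laplaceKernel_mul_inv ht, ← laplaceKernel_mul_inv ht]
    ring
  simp only [Real.Gamma_one, one_mul, sub_self, Real.rpow_zero, Real.rpow_one, hscale] at hmellin
  have hint {c : ℝ} (hc : 1 ≤ c) :
      IntegrableOn (laplaceKernel (d / 2 + c) (‖ν‖ ^ 2 / 2)) (Set.Ioi 0) := by
    have : (0 : ℝ) < d / 2 := by positivity
    exact integrableOn_laplaceKernel (by linarith) (by positivity)
  rw [hmellin, setIntegral_congr_fun measurableSet_Ioi hinner,
    integral_add ((hint one_le_two).const_mul _) ((hint le_rfl).const_mul _),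
    integral_const_mul, integral_const_mul, gFun_eq_integral_laplaceKernel hd]
  ring

-- Summed over an orthonormal basis, the squared coordinates of `normalize y` give `1`.
lemma norm_sq_mul_integral_laplaceKernel_add [Nontrivial E] (ν : E) :
    ‖ν‖ ^ 2 * ((∫ t in Set.Ioi (0 : ℝ),
        laplaceKernel (Module.finrank ℝ E / 2 + 2) (‖ν‖ ^ 2 / 2) t) / 2) +
      Module.finrank ℝ E * gFun (Module.finrank ℝ E) ‖ν‖ = 1 := by
  let b := stdOrthonormalBasis ℝ E
  have hunit : ∀ᵐ y ∂isotropicGaussian ν, ∑ i, ⟪b i, normalize y⟫ ^ 2 = 1 := by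
    filter_upwards [ae_ne_zero_isotropicGaussian ν] with y hy
    rw [b.sum_sq_inner_right, NormedSpace.norm_normalize_eq_one_iff.2 hy, one_pow]
  have htrace : ∑ i, ∫ y, ⟪b i, normalize y⟫ ^ 2 ∂isotropicGaussian ν = 1 := by
    rw [← integral_finsetSum _ fun i _ =>
        (memLp_inner_normalize (b.norm_eq_one i) 2 ν).integrable_sq,
      integral_congr_ae hunit, integral_const, probReal_univ, one_smul]
  simp_rw [fun i => integral_inner_normalize_sq_eq_integral_laplaceKernel (b.norm_eq_one i) ν]
    at htrace
  rwa [Finset.sum_add_distrib, ← Finset.sum_mul, b.sum_sq_inner_right, Finset.sum_const,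
    Finset.card_univ, Fintype.card_fin, nsmul_eq_mul] at htrace

lemma integral_inner_normalize_sq_isotropicGaussian (hθ : ‖θ‖ = 1) (ν : E) :
    ∫ y, ⟪θ, normalize y⟫ ^ 2 ∂isotropicGaussian ν =
      ⟪θ, normalize ν⟫ ^ 2 * (1 - Module.finrank ℝ E * gFun (Module.finrank ℝ E) ‖ν‖) +
        gFun (Module.finrank ℝ E) ‖ν‖ := by
  have := nontrivial_of_norm_eq_one hθ
  rw [integral_inner_normalize_sq_eq_integral_laplaceKernel hθ, ← inner_normalize_mul_norm θ ν,
    ← norm_sq_mul_integral_laplaceKernel_add ν]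
  ring

lemma fFun_eq_one_sub (d : ℕ) (x : ℝ) :
    fFun d x = 1 - (d - 1) * gFun d x - varrho d x ^ 2 := by
  rw [fFun, gFun]
  ring

lemma variance_inner_normalize_isotropicGaussian (hθ : ‖θ‖ = 1) (ν : E) :
    Var[fun y => ⟪θ, normalize y⟫; isotropicGaussian ν] =
      (fFun (Module.finrank ℝ E) ‖ν‖ - gFun (Module.finrank ℝ E) ‖ν‖) * ⟪θ, normalize ν⟫ ^ 2 +
        gFun (Module.finrank ℝ E) ‖ν‖ := by
  rw [variance_eq_sub (memLp_inner_normalize hθ 2 ν),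
    integral_inner_normalize_isotropicGaussian hθ]
  simp only [Pi.pow_apply, integral_inner_normalize_sq_isotropicGaussian hθ, fFun_eq_one_sub]
  ring

end IsotropicGaussian

section Centering

open WithLp (toLp)
open NormedSpace (normalize)
open scoped RealInnerProductSpace

lemma stdGaussian_map_of_norm_adjoint {E F : Type*} [NormedAddCommGroup E]
    [InnerProductSpace ℝ E] [FiniteDimensional ℝ E] [MeasurableSpace E] [BorelSpace E]
    [NormedAddCommGroup F] [InnerProductSpace ℝ F] [FiniteDimensional ℝ F] [MeasurableSpace F]
    [BorelSpace F] {T : E →L[ℝ] F} (hT : ∀ y, ‖ContinuousLinearMap.adjoint T y‖ = ‖y‖) :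
    (stdGaussian E).map T = stdGaussian F := by
  refine Measure.ext_of_charFun (funext fun t => ?_)
  rw [charFun_apply, integral_map (by fun_prop) (by fun_prop)]
  simp_rw [← ContinuousLinearMap.adjoint_inner_right]
  rw [← charFun_apply, charFun_stdGaussian, charFun_stdGaussian, hT]

/-- The hyperplane `⟨𝟙⟩^⊥` of vectors whose coordinates sum to zero. -/
def centeredSubspace (n : ℕ) : Submodule ℝ (EuclideanSpace ℝ (Fin n)) := (ℝ ∙ toLp 2 1)ᗮ

/-- The map `z ↦ Pz` of the paper, with values in the Euclidean space `⟨𝟙⟩^⊥`. -/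
def centering (n : ℕ) : (Fin n → ℝ) →L[ℝ] centeredSubspace n :=
  (centeredSubspace n).orthogonalProjectionOnto ∘L (EuclideanSpace.equiv (Fin n) ℝ).symm

variable {n : ℕ}

lemma toLp_mem_centeredSubspace {θ : Fin n → ℝ} :
    toLp 2 θ ∈ centeredSubspace n ↔ ∑ i, θ i = 0 := by
  simp [centeredSubspace, Submodule.mem_orthogonal_singleton_iff_inner_right, PiLp.inner_apply]

lemma centerMat_mulVec (z : Fin n → ℝ) :
    centerMat n *ᵥ z = z - fun _ => (n : ℝ)⁻¹ * ∑ i, z i := by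
  rw [centerMat, sub_mulVec, one_mulVec, smul_mulVec]
  ext i
  simp [mulVec, dotProduct]

lemma coe_centering (z : Fin n → ℝ) :
    (centering n z : EuclideanSpace ℝ (Fin n)) = toLp 2 (centerMat n *ᵥ z) := by
  change (((ℝ ∙ toLp 2 1)ᗮ).orthogonalProjectionOnto (toLp 2 z) : EuclideanSpace ℝ (Fin n)) = _
  rw [Submodule.coe_orthogonalProjectionOnto_apply, Submodule.starProjection_orthogonal_val,
    Submodule.starProjection_singleton, centerMat_mulVec]
  ext i
  simp [PiLp.inner_apply, EuclideanSpace.norm_sq_eq, div_eq_inv_mul]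

lemma euclNorm_eq_norm (x : Fin n → ℝ) : euclNorm x = ‖toLp 2 x‖ := by
  simp [euclNorm, EuclideanSpace.norm_eq]

lemma norm_centering (z : Fin n → ℝ) : ‖centering n z‖ = euclNorm (centerMat n *ᵥ z) := by
  rw [euclNorm_eq_norm, ← coe_centering, Submodule.coe_norm]

lemma dotProduct_chi (θ : centeredSubspace n) (z : Fin n → ℝ) :
    θ.1.ofLp ⬝ᵥ chi z = ⟪θ, normalize (centering n z)⟫ := by
  rw [NormedSpace.normalize, real_inner_smul_right, Submodule.coe_inner, coe_centering,
    norm_centering, chi, dotProduct_smul, smul_eq_mul, EuclideanSpace.inner_eq_star_dotProduct,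
    dotProduct_comm]
  rfl

lemma finrank_centeredSubspace (hn : n ≠ 0) :
    Module.finrank ℝ (centeredSubspace n) = n - 1 := by
  obtain ⟨m, rfl⟩ := Nat.exists_eq_succ_of_ne_zero hn
  have : Fact (Module.finrank ℝ (EuclideanSpace ℝ (Fin (m + 1))) = m + 1) :=
    ⟨finrank_euclideanSpace_fin⟩
  have hone : toLp 2 (1 : Fin (m + 1) → ℝ) ≠ 0 := by
    simp
  exact Submodule.finrank_orthogonal_span_singleton (n := m) hone

lemma centerMat_mulVec_coe (y : centeredSubspace n) :
    centerMat n *ᵥ y.1.ofLp = y.1.ofLp := by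
  have := toLp_mem_centeredSubspace.1 y.2
  rw [centerMat_mulVec, this, mul_zero]
  exact sub_zero _

lemma centerMat_transpose : (centerMat n)ᵀ = centerMat n := by
  rw [centerMat, transpose_sub, transpose_one, transpose_smul]
  rfl

lemma centerMat_mul_of_one : centerMat n * Matrix.of (fun _ _ => 1) = 0 := by
  rw [centerMat, sub_mul, one_mul, Matrix.smul_mul]
  ext i j
  have hn : (n : ℝ) ≠ 0 := mod_cast i.pos.ne'
  simp [Matrix.mul_apply, hn]

lemma centerMat_mul_self : centerMat n * centerMat n = centerMat n := by
  nth_rw 2 [centerMat]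
  rw [mul_sub, mul_one, Matrix.mul_smul, centerMat_mul_of_one, smul_zero, sub_zero]

lemma Ximat_eq (ρ : ℝ) : Ximat n ρ = (1 - ρ) • 1 + ρ • Matrix.of (fun _ _ => 1) := by
  ext i j
  by_cases h : i = j <;> simp [Ximat, h]

lemma centerMat_mul_smul_Ximat_mul_centerMat (σ : ℝ) {ρ : ℝ} (hρ : ρ ≤ 1) :
    centerMat n * (σ ^ 2 • Ximat n ρ) * centerMat n = (σ * √(1 - ρ)) ^ 2 • centerMat n := by
  rw [Ximat_eq, Matrix.mul_smul, mul_add, Matrix.mul_smul, Matrix.mul_smul, centerMat_mul_of_one,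
    smul_zero, add_zero, mul_one, smul_smul, Matrix.smul_mul, centerMat_mul_self, mul_pow,
    Real.sq_sqrt (sub_nonneg.2 hρ)]

lemma norm_toEuclideanCLM_transpose_coe {A : Matrix (Fin n) (Fin n) ℝ} {s : ℝ} (hs : 0 ≤ s)
    (hA : centerMat n * (A * Aᵀ) * centerMat n = s ^ 2 • centerMat n) (y : centeredSubspace n) :
    ‖toEuclideanCLM (𝕜 := ℝ) Aᵀ y‖ = s * ‖y‖ := by
  set v : Fin n → ℝ := y.1.ofLp
  have hv : centerMat n *ᵥ v = v := centerMat_mulVec_coe y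
  have hv' : v ᵥ* centerMat n = v := by
    rw [← mulVec_transpose, centerMat_transpose, hv]
  have hnorm (u : EuclideanSpace ℝ (Fin n)) : ‖u‖ ^ 2 = u.ofLp ⬝ᵥ u.ofLp := by
    rw [← real_inner_self_eq_norm_sq, EuclideanSpace.inner_eq_star_dotProduct, star_trivial]
  rw [← sq_eq_sq₀ (norm_nonneg _) (by positivity), mul_pow]
  calc ‖toEuclideanCLM (𝕜 := ℝ) Aᵀ y‖ ^ 2
    _ = v ⬝ᵥ (A * Aᵀ) *ᵥ v := by
      rw [hnorm, ofLp_toEuclideanCLM, ← mulVec_mulVec, dotProduct_mulVec v, ← mulVec_transpose]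
    _ = v ⬝ᵥ (centerMat n * (A * Aᵀ) * centerMat n) *ᵥ v := by
      rw [← mulVec_mulVec v (centerMat n * _), hv, ← mulVec_mulVec v (centerMat n),
        dotProduct_mulVec v (centerMat n), hv']
    _ = s ^ 2 * ‖y‖ ^ 2 := by
      rw [hA, smul_mulVec, hv, dotProduct_smul, smul_eq_mul, Submodule.coe_norm, hnorm]

lemma stdGaussianPi_map_centering_mulVec {A : Matrix (Fin n) (Fin n) ℝ} {s : ℝ} (hs : 0 < s)
    (hA : centerMat n * (A * Aᵀ) * centerMat n = s ^ 2 • centerMat n) :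
    (stdGaussianPi n).map (fun x => s⁻¹ • centering n (A *ᵥ x)) =
      stdGaussian (centeredSubspace n) := by
  let T : EuclideanSpace ℝ (Fin n) →L[ℝ] centeredSubspace n :=
    s⁻¹ • (centeredSubspace n).orthogonalProjectionOnto ∘L toEuclideanCLM (𝕜 := ℝ) A
  have hT (y) : ‖ContinuousLinearMap.adjoint T y‖ = ‖y‖ := by
    have hadj : ContinuousLinearMap.adjoint T y = s⁻¹ • toEuclideanCLM (𝕜 := ℝ) Aᵀ y := by
      rw [map_smulₛₗ, ContinuousLinearMap.adjoint_comp, Submodule.adjoint_orthogonalProjectionOnto,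
        ← ContinuousLinearMap.star_eq_adjoint, ← map_star, star_eq_conjTranspose,
        conjTranspose_eq_transpose_of_trivial]
      rfl
    rw [hadj, norm_smul, norm_toEuclideanCLM_transpose_coe hs.le hA, Real.norm_of_nonneg
      (by positivity), inv_mul_cancel_left₀ hs.ne']
  rw [← stdGaussian_map_of_norm_adjoint hT, ← map_pi_eq_stdGaussian,
    Measure.map_map (by fun_prop) (by fun_prop)]
  rfl

lemma IsGaussianVec.aemeasurable {Ω : Type*} [MeasurableSpace Ω] {P : Measure Ω}
    {Z : Ω → Fin n → ℝ} {μ : Fin n → ℝ} {S : Matrix (Fin n) (Fin n) ℝ}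
    (hZ : IsGaussianVec P Z μ S) : AEMeasurable Z P := by
  obtain ⟨A, -, hlaw⟩ := hZ
  have : IsProbabilityMeasure (stdGaussianPi n) := by
    unfold stdGaussianPi
    infer_instance
  have : IsProbabilityMeasure (P.map Z) :=
    hlaw ▸ Measure.isProbabilityMeasure_map (by fun_prop)
  exact aemeasurable_of_map_neZero inferInstance

lemma IsGaussianVec.map_smul_centering {Ω : Type*} [MeasurableSpace Ω] {P : Measure Ω}
    {Z : Ω → Fin n → ℝ} {μ : Fin n → ℝ} {S : Matrix (Fin n) (Fin n) ℝ} {s : ℝ}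
    (hZ : IsGaussianVec P Z μ S) (hs : 0 < s)
    (hS : centerMat n * S * centerMat n = s ^ 2 • centerMat n) :
    P.map (fun ω => s⁻¹ • centering n (Z ω)) = isotropicGaussian (s⁻¹ • centering n μ) := by
  have hZ_meas := hZ.aemeasurable
  obtain ⟨A, rfl, hlaw⟩ := hZ
  change P.map ((fun z => s⁻¹ • centering n z) ∘ Z) = _
  rw [← AEMeasurable.map_map_of_aemeasurable (by fun_prop) hZ_meas, hlaw, isotropicGaussian,
    ← stdGaussianPi_map_centering_mulVec hs hS, Measure.map_map (by fun_prop) (by fun_prop),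
    Measure.map_map (by fun_prop) (by fun_prop)]
  congr 1
  funext x
  simp only [Function.comp_apply, map_add, smul_add]

end Centering

-- When `Pμ = 0`, the factor `fFun - gFun` vanishes at `0`, so the value `chi μ = 0` is harmless.
theorem stmt15_general {Ω : Type*} [MeasurableSpace Ω] (P : Measure Ω) {n : ℕ} {s : ℝ}
    (hs : 0 < s) {S : Matrix (Fin n) (Fin n) ℝ}
    (hS : centerMat n * S * centerMat n = s ^ 2 • centerMat n)
    (μ : Fin n → ℝ) (Z : Ω → Fin n → ℝ) (hgauss : IsGaussianVec P Z μ S)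
    (θ : Fin n → ℝ) (hθ : euclNorm θ = 1) (hθ' : ∑ i, θ i = 0) :
    variance (fun ω => θ ⬝ᵥ chi (Z ω)) P =
      (fFun (n - 1) (euclNorm (centerMat n *ᵥ μ) / s) -
        gFun (n - 1) (euclNorm (centerMat n *ᵥ μ) / s)) * (chi μ ⬝ᵥ θ) ^ 2 +
      gFun (n - 1) (euclNorm (centerMat n *ᵥ μ) / s) := by
  have hn : n ≠ 0 := by
    rintro rfl
    simp [euclNorm] at hθ
  let ϑ : centeredSubspace n := ⟨WithLp.toLp 2 θ, toLp_mem_centeredSubspace.2 hθ'⟩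
  have hϑ : ‖ϑ‖ = 1 := by rwa [Submodule.coe_norm, ← euclNorm_eq_norm]
  have hchi (z : Fin n → ℝ) :
      θ ⬝ᵥ chi z = inner ℝ ϑ (NormedSpace.normalize (s⁻¹ • centering n z)) := by
    rw [NormedSpace.normalize_smul_of_pos (inv_pos.2 hs), ← dotProduct_chi]
  have hnorm : ‖s⁻¹ • centering n μ‖ = euclNorm (centerMat n *ᵥ μ) / s := by
    rw [norm_smul, norm_centering, Real.norm_of_nonneg (by positivity), inv_mul_eq_div]
  have hZ := hgauss.aemeasurable
  have hvar := variance_inner_normalize_isotropicGaussian hϑ (s⁻¹ • centering n μ)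
  rw [← hgauss.map_smul_centering hs hS, finrank_centeredSubspace hn, ← hchi, dotProduct_comm,
    hnorm, variance_map measurable_inner_normalize.aemeasurable (by fun_prop)] at hvar
  simpa only [hchi, Function.comp_def] using hvar

/-- variance of `T_{χ(Z)}(θ)` for `Z ~ N(μ, σ²Ξ)`. -/
theorem stmt15 {Ω : Type*} [MeasurableSpace Ω] (P : Measure Ω) [IsProbabilityMeasure P]
    {n : ℕ} (hn : 3 ≤ n) (σ ρ : ℝ) (hσ : 0 < σ)
    (hρ₁ : -(1 / (n : ℝ)) < ρ) (hρ₂ : ρ < 1)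
    (μ : Fin n → ℝ) (Z : Ω → Fin n → ℝ)
    (hgauss : IsGaussianVec P Z μ (σ ^ 2 • Ximat n ρ))
    (hPμ : (centerMat n).mulVec μ ≠ 0) :
    ∀ θ : Fin n → ℝ, euclNorm θ = 1 → (∑ i, θ i) = 0 →
      variance (fun ω => θ ⬝ᵥ chi (Z ω)) P =
        (fFun (n - 1) (euclNorm ((centerMat n).mulVec μ) / (σ * Real.sqrt (1 - ρ))) -
          gFun (n - 1) (euclNorm ((centerMat n).mulVec μ) / (σ * Real.sqrt (1 - ρ)))) *
          (chi μ ⬝ᵥ θ) ^ 2 +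
        gFun (n - 1) (euclNorm ((centerMat n).mulVec μ) / (σ * Real.sqrt (1 - ρ))) := by
  have hs : 0 < σ * Real.sqrt (1 - ρ) := mul_pos hσ (Real.sqrt_pos.2 (sub_pos.2 hρ₂))
  exact stmt15_general P hs (centerMat_mul_smul_Ximat_mul_centerMat σ hρ₂.le) μ Z hgauss
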